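/- Let k ≥ 1, r ≥ 1, and suppose the data matrices X_i ∈ ℝ^{m_i×d} satisfy X_iᵀX_i = α_i Σ for all i = 1,…,k, where Σ ∈ ℝ^{d×d} is positive definite and α_i > 0. Let y_i ∈ ℝ^{m_i}, and consider the function f(A_1,…,A_k;B) = Σ_{i=1}^k ‖X_i B A_i − y_i‖² on the joint parameter space (A_1,…,A_k,B) ∈ (ℝ^r)^k × ℝ^{d×r}. Then every local minimum of f is a global minimum of f. -/

import Mathlib

open Matrix BigOperators

/-- Euclidean norm of a vector in `ℝ^n`. -/
noncomputable def vnorm {n : ℕ} (v : Fin n → ℝ) : ℝ := Real.sqrt (∑ i, v i ^ 2)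

open scoped RealInnerProductSpace
open Filter Topology

section Subspaces

variable {E : Type*} [NormedAddCommGroup E] [InnerProductSpace ℝ E] [FiniteDimensional ℝ E]

theorem sum_sq_inner_stdOrthonormalBasis (V : Submodule ℝ E) (x : E) :
    ∑ j, ⟪(stdOrthonormalBasis ℝ V j : E), x⟫ ^ 2 = ‖V.starProjection x‖ ^ 2 := by
  have h := (stdOrthonormalBasis ℝ V).sum_sq_inner_right (V.orthogonalProjectionOnto x)
  rw [V.starProjection_apply, ← Submodule.coe_norm, ← h]
  refine Finset.sum_congr rfl fun j _ => ?_
  rw [Submodule.coe_inner, ← V.starProjection_apply, ← V.inner_starProjection_left_eq_right,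
    V.starProjection_eq_self_iff.mpr (Submodule.coe_mem _)]

theorem sum_sq_inner_add_sum_sq_inner_orthogonal (V : Submodule ℝ E) (x : E) :
    ∑ j, ⟪(stdOrthonormalBasis ℝ V j : E), x⟫ ^ 2 +
      ∑ j, ⟪(stdOrthonormalBasis ℝ Vᗮ j : E), x⟫ ^ 2 = ‖x‖ ^ 2 := by
  rw [sum_sq_inner_stdOrthonormalBasis, sum_sq_inner_stdOrthonormalBasis,
    ← V.norm_sq_eq_add_norm_sq_starProjection]

theorem norm_coe_stdOrthonormalBasis (V : Submodule ℝ E) (j : Fin (Module.finrank ℝ V)) :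
    ‖(stdOrthonormalBasis ℝ V j : E)‖ = 1 := by
  rw [← Submodule.coe_norm]
  exact (stdOrthonormalBasis ℝ V).orthonormal.1 j

variable {ι : Type*} [Fintype ι]

/-- If the quadratic form `x ↦ ∑ i, ⟪m i, x⟫ ^ 2` is at least `c ‖x‖ ^ 2` on `U`, at most
`c ‖x‖ ^ 2` on `Uᗮ`, and splits along `U ⊕ Uᗮ`, then `U` captures at least as much of the
vectors `m i` as any subspace of no larger dimension. -/
theorem sum_norm_sq_starProjection_le_of_separation (m : ι → E) (U V : Submodule ℝ E)
    (hdim : Module.finrank ℝ V ≤ Module.finrank ℝ U)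
    (hcross : ∀ x ∈ U, ∀ w ∈ Uᗮ, ∑ i, ⟪m i, x⟫ * ⟪m i, w⟫ = 0)
    {c : ℝ} (hc : 0 ≤ c)
    (hU : ∀ x ∈ U, c * ‖x‖ ^ 2 ≤ ∑ i, ⟪m i, x⟫ ^ 2)
    (hUo : ∀ w ∈ Uᗮ, ∑ i, ⟪m i, w⟫ ^ 2 ≤ c * ‖w‖ ^ 2) :
    ∑ i, ‖V.starProjection (m i)‖ ^ 2 ≤ ∑ i, ‖U.starProjection (m i)‖ ^ 2 := by
  set φ : E → ℝ := fun e =>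
    ∑ i, ⟪m i, U.starProjection e⟫ ^ 2 - c * ‖U.starProjection e‖ ^ 2 with hφ
  have hφ0 : ∀ e, 0 ≤ φ e := fun e =>
    sub_nonneg.mpr (hU _ (U.starProjection_apply_mem e))
  have hle : ∀ e, ‖e‖ = 1 → ∑ i, ⟪m i, e⟫ ^ 2 ≤ c + φ e := by
    intro e he
    have hsplit : ∑ i, ⟪m i, e⟫ ^ 2 =
        ∑ i, ⟪m i, U.starProjection e⟫ ^ 2 + ∑ i, ⟪m i, Uᗮ.starProjection e⟫ ^ 2 := by
      have h := hcross _ (U.starProjection_apply_mem e) _ (Uᗮ.starProjection_apply_mem e)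
      have h2 : ∀ i, ⟪m i, e⟫ = ⟪m i, U.starProjection e⟫ + ⟪m i, Uᗮ.starProjection e⟫ := by
        intro i
        rw [← inner_add_right, U.starProjection_add_starProjection_orthogonal]
      simp_rw [h2, add_sq, Finset.sum_add_distrib, mul_assoc, ← Finset.mul_sum, h]
      ring
    have hn := U.norm_sq_eq_add_norm_sq_starProjection e
    have hw := hUo _ (Uᗮ.starProjection_apply_mem e)
    rw [he] at hn
    rw [hsplit]
    simp only [hφ]
    linear_combination hw - c * hn
  have htrace : ∑ j, φ (stdOrthonormalBasis ℝ V j) + ∑ j, φ (stdOrthonormalBasis ℝ Vᗮ j) =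
      ∑ i, ‖U.starProjection (m i)‖ ^ 2 - c * Module.finrank ℝ U := by
    have hφe : ∀ e, φ e = ∑ i, ⟪e, U.starProjection (m i)⟫ ^ 2 -
        c * ∑ l, ⟪e, (stdOrthonormalBasis ℝ U l : E)⟫ ^ 2 := by
      intro e
      simp only [hφ, ← sum_sq_inner_stdOrthonormalBasis U e,
        ← U.inner_starProjection_left_eq_right, real_inner_comm e]
    have key : ∀ x : E, ‖x‖ ^ 2 = _ := fun x => (sum_sq_inner_add_sum_sq_inner_orthogonal V x).symm
    have hcard : (Module.finrank ℝ U : ℝ) = ∑ l, ‖(stdOrthonormalBasis ℝ U l : E)‖ ^ 2 := by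
      simp [norm_coe_stdOrthonormalBasis]
    rw [hcard]
    simp_rw [hφe, key, Finset.sum_sub_distrib, Finset.sum_add_distrib, ← Finset.mul_sum]
    rw [Finset.sum_comm, Finset.sum_comm (s := Finset.univ (α := Fin (Module.finrank ℝ Vᗮ))),
      Finset.sum_comm (t := Finset.univ (α := Fin (Module.finrank ℝ U))),
      Finset.sum_comm (s := Finset.univ (α := Fin (Module.finrank ℝ Vᗮ)))
        (t := Finset.univ (α := Fin (Module.finrank ℝ U)))]
    ring
  calc ∑ i, ‖V.starProjection (m i)‖ ^ 2
      = ∑ j, ∑ i, ⟪m i, (stdOrthonormalBasis ℝ V j : E)⟫ ^ 2 := by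
        rw [Finset.sum_comm]
        simp_rw [← sum_sq_inner_stdOrthonormalBasis, real_inner_comm]
    _ ≤ ∑ j, (c + φ (stdOrthonormalBasis ℝ V j)) :=
        Finset.sum_le_sum fun j _ => hle _ (norm_coe_stdOrthonormalBasis V j)
    _ = c * Module.finrank ℝ V + ∑ j, φ (stdOrthonormalBasis ℝ V j) := by
        simp [Finset.sum_add_distrib, mul_comm]
    _ ≤ c * Module.finrank ℝ U +
        (∑ j, φ (stdOrthonormalBasis ℝ V j) + ∑ j, φ (stdOrthonormalBasis ℝ Vᗮ j)) := by
        gcongr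
        exact le_add_of_nonneg_right (Finset.sum_nonneg fun _ _ => hφ0 _)
    _ = ∑ i, ‖U.starProjection (m i)‖ ^ 2 := by
        rw [htrace]
        ring

theorem sum_norm_sq_starProjection_le (m : ι → E) (U V : Submodule ℝ E)
    (hdim : Module.finrank ℝ V ≤ Module.finrank ℝ U)
    (hcross : ∀ x ∈ U, ∀ w ∈ Uᗮ, ∑ i, ⟪m i, x⟫ * ⟪m i, w⟫ = 0)
    (hcomp : ∀ x ∈ U, ∀ w ∈ Uᗮ,
      ‖x‖ ^ 2 * ∑ i, ⟪m i, w⟫ ^ 2 ≤ ‖w‖ ^ 2 * ∑ i, ⟪m i, x⟫ ^ 2) :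
    ∑ i, ‖V.starProjection (m i)‖ ^ 2 ≤ ∑ i, ‖U.starProjection (m i)‖ ^ 2 := by
  rcases eq_or_ne U ⊥ with rfl | hne
  · have hV : V = ⊥ := Submodule.finrank_eq_zero.mp (by simpa using hdim)
    rw [hV]
  obtain ⟨x₀, hx₀, hx₀ne⟩ := Submodule.exists_mem_ne_zero_of_ne_bot hne
  let ratio : E → ℝ := fun x => (∑ i, ⟪m i, x⟫ ^ 2) / ‖x‖ ^ 2
  obtain ⟨c, hc₁, hc₂⟩ := exists_between_of_forall_le
    (s := ratio '' (Uᗮ : Set E)) (t := ratio '' {x | x ∈ U ∧ x ≠ 0})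
    ⟨_, 0, Uᗮ.zero_mem, rfl⟩ ⟨_, x₀, ⟨hx₀, hx₀ne⟩, rfl⟩ (by
      rintro _ ⟨w, hw, rfl⟩ _ ⟨x, ⟨hx, hxne⟩, rfl⟩
      have hxpos : 0 < ‖x‖ ^ 2 := by positivity
      rcases eq_or_ne w 0 with rfl | hwne
      · simp only [ratio, norm_zero]
        simp only [ne_eq, OfNat.ofNat_ne_zero, not_false_eq_true, zero_pow, div_zero]
        positivity
      · have hwpos : 0 < ‖w‖ ^ 2 := by positivity
        rw [div_le_div_iff₀ hwpos hxpos]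
        linarith [hcomp x hx w hw])
  refine sum_norm_sq_starProjection_le_of_separation m U V hdim hcross (c := c) ?_ ?_ ?_
  · simpa [ratio] using hc₁ ⟨0, Uᗮ.zero_mem, rfl⟩
  · intro x hx
    rcases eq_or_ne x 0 with rfl | hxne
    · simp
    · exact (le_div_iff₀ (by positivity)).mp (hc₂ ⟨x, ⟨hx, hxne⟩, rfl⟩)
  · intro w hw
    rcases eq_or_ne w 0 with rfl | hwne
    · simp
    · exact (div_le_iff₀ (by positivity)).mp (hc₁ ⟨w, hw, rfl⟩)

end Subspaces

section LocalMin

theorem eq_zero_of_eventually_nonneg {β γ : ℝ}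
    (h : ∀ᶠ t : ℝ in 𝓝 0, 0 ≤ t * β + t ^ 2 * γ) : β = 0 := by
  have hmin : IsLocalMin (fun t : ℝ => t * β + t ^ 2 * γ) 0 := by
    simpa [IsLocalMin, IsMinFilter] using h
  have hd : HasDerivAt (fun t : ℝ => t * β + t ^ 2 * γ) β 0 := by
    have h₁ : HasDerivAt (fun t : ℝ => t * β) (1 * β) 0 := (hasDerivAt_id 0).mul_const β
    have h₂ : HasDerivAt (fun t : ℝ => t ^ 2 * γ) ((2 : ℕ) * 0 ^ (2 - 1) * γ) 0 :=
      (hasDerivAt_pow 2 (0 : ℝ)).mul_const γ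
    exact (h₁.add h₂).congr_deriv (by simp)
  exact hmin.hasDerivAt_eq_zero hd

theorem nonneg_of_eventually_nonneg {β γ : ℝ}
    (h : ∀ᶠ t : ℝ in 𝓝 0, 0 ≤ t ^ 2 * β + t ^ 4 * γ) : 0 ≤ β := by
  have hlim : Tendsto (fun t : ℝ => β + t ^ 2 * γ) (𝓝[≠] 0) (𝓝 β) := by
    have hc : Continuous fun t : ℝ => β + t ^ 2 * γ := by fun_prop
    simpa using (hc.tendsto 0).mono_left nhdsWithin_le_nhds
  refine ge_of_tendsto hlim ?_
  filter_upwards [h.filter_mono nhdsWithin_le_nhds, self_mem_nhdsWithin] with t ht ht0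
  have hpos : 0 < t ^ 2 := by
    have : t ≠ 0 := ht0
    positivity
  refine nonneg_of_mul_nonneg_right ?_ hpos
  linarith

theorem IsLocalMin.eventually_isLocalMin_of_eq {P : Type*} [TopologicalSpace P] {f : P → ℝ}
    {p : P} (hp : IsLocalMin f p) : ∀ᶠ q in 𝓝 p, f q = f p → IsLocalMin f q := by
  filter_upwards [eventually_eventually_nhds.mpr hp] with q hq hfq
  simpa [IsLocalMin, IsMinFilter, hfq] using hq

theorem IsLocalMin.eventually_le_comp {P : Type*} [TopologicalSpace P] {f : P → ℝ}
    {p : P} (hp : IsLocalMin f p) {γ : ℝ → P} (hγ : Continuous γ) (h0 : γ 0 = p) :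
    ∀ᶠ t in 𝓝 0, f p ≤ f (γ t) := by
  have h := hγ.tendsto 0
  rw [h0] at h
  exact h.eventually hp

end LocalMin

section Factorization

variable {E : Type*} [NormedAddCommGroup E] [InnerProductSpace ℝ E]
  {ι κ : Type*} [Fintype ι] [Fintype κ]

/-- The residual of approximating `m i` by the combination of the vectors `p.2 j` with
coefficients `p.1 i j`. -/
def factorResidual (m : ι → E) (p : (ι → κ → ℝ) × (κ → E)) (i : ι) : E :=
  ∑ j, p.1 i j • p.2 j - m i

/-- The squared error of the factorization `p` of the family `m`. -/
noncomputable def factorLoss (m : ι → E) (p : (ι → κ → ℝ) × (κ → E)) : ℝ :=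
  ∑ i, ‖factorResidual m p i‖ ^ 2

theorem sum_inner_eq_zero_of_eventually_le (R D : ι → E)
    (h : ∀ᶠ t : ℝ in 𝓝 0, ∑ i, ‖R i‖ ^ 2 ≤ ∑ i, ‖R i + t • D i‖ ^ 2) :
    ∑ i, ⟪R i, D i⟫ = 0 := by
  have h2 : 2 * ∑ i, ⟪R i, D i⟫ = 0 := by
    refine eq_zero_of_eventually_nonneg (γ := ∑ i, ‖D i‖ ^ 2) ?_
    filter_upwards [h] with t ht
    have hexp : ∑ i, ‖R i + t • D i‖ ^ 2 =
        ∑ i, ‖R i‖ ^ 2 + t * (2 * ∑ i, ⟪R i, D i⟫) + t ^ 2 * ∑ i, ‖D i‖ ^ 2 := by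
      simp_rw [Finset.mul_sum, ← Finset.sum_add_distrib]
      refine Finset.sum_congr rfl fun i _ => ?_
      rw [norm_add_sq_real, inner_smul_right, norm_smul, mul_pow, Real.norm_eq_abs, sq_abs]
      ring
    linarith
  linarith

theorem inner_factorResidual_eq_zero [DecidableEq ι] [DecidableEq κ] {m : ι → E}
    {p : (ι → κ → ℝ) × (κ → E)} (hp : IsLocalMin (factorLoss m) p) (i : ι) (j : κ) :
    ⟪factorResidual m p i, p.2 j⟫ = 0 := by
  have h := sum_inner_eq_zero_of_eventually_le (factorResidual m p)
    (Pi.single i (p.2 j)) (by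
      have hγ := hp.eventually_le_comp
        (γ := fun t : ℝ => (p.1 + t • (Pi.single i (Pi.single j 1) : ι → κ → ℝ), p.2))
        (by fun_prop) (by simp)
      filter_upwards [hγ] with t ht
      refine ht.trans_eq (Finset.sum_congr rfl fun l _ => ?_)
      congr 2
      rcases eq_or_ne l i with rfl | hl
      · simp [factorResidual, add_smul, Finset.sum_add_distrib, Pi.single_apply]
        abel
      · simp [factorResidual, hl])
  rw [Finset.sum_eq_single i (fun l _ hl => by simp [hl]) (by simp)] at h
  simpa using h

theorem sum_smul_factorResidual_eq_zero [DecidableEq κ] {m : ι → E}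
    {p : (ι → κ → ℝ) × (κ → E)} (hp : IsLocalMin (factorLoss m) p) (j : κ) :
    ∑ i, p.1 i j • factorResidual m p i = 0 := by
  refine ext_inner_right ℝ fun h => ?_
  have key := sum_inner_eq_zero_of_eventually_le (factorResidual m p)
    (fun i => p.1 i j • h) (by
      have hγ := hp.eventually_le_comp
        (γ := fun t : ℝ => (p.1, p.2 + t • (Pi.single j h : κ → E))) (by fun_prop) (by simp)
      filter_upwards [hγ] with t ht
      refine ht.trans_eq (Finset.sum_congr rfl fun l _ => ?_)
      congr 2
      simp [factorResidual, smul_add, Finset.sum_add_distrib, Pi.single_apply, smul_comm t]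
      abel)
  simpa [sum_inner, inner_smul_left, inner_smul_right] using key

/-- At a local minimum whose vectors are linearly dependent, the factorization is exact. -/
theorem factorResidual_eq_zero_of_not_linearIndependent [DecidableEq ι] [DecidableEq κ]
    {m : ι → E} {p : (ι → κ → ℝ) × (κ → E)} (hp : IsLocalMin (factorLoss m) p)
    (hb : ¬ LinearIndependent ℝ p.2) (i : ι) : factorResidual m p i = 0 := by
  obtain ⟨v, hv, j, hj⟩ := Fintype.not_linearIndependent_iff.mp hb
  let γ : ℝ → (ι → κ → ℝ) × (κ → E) := fun t => (p.1 + t • (Pi.single i v : ι → κ → ℝ), p.2)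
  have hres : ∀ t, factorResidual m (γ t) = factorResidual m p := by
    intro t
    ext l
    rcases eq_or_ne l i with rfl | hl
    · simp [γ, factorResidual, add_smul, Finset.sum_add_distrib, mul_smul, ← Finset.smul_sum, hv]
    · simp [γ, factorResidual, hl]
  have hγ : Tendsto γ (𝓝 0) (𝓝 p) := by
    have hc : Continuous γ := by fun_prop
    simpa [γ] using hc.tendsto 0
  have hev : ∀ᶠ t : ℝ in 𝓝[≠] 0, IsLocalMin (factorLoss m) (γ t) := by
    filter_upwards [(hγ.eventually hp.eventually_isLocalMin_of_eq).filter_mono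
      nhdsWithin_le_nhds] with t ht
    exact ht (by simp [factorLoss, hres])
  obtain ⟨t, hmin, ht⟩ := (hev.and self_mem_nhdsWithin).exists
  have ht0 : t ≠ 0 := ht
  have h1 := sum_smul_factorResidual_eq_zero hmin j
  have h2 := sum_smul_factorResidual_eq_zero hp j
  rw [hres] at h1
  have h3 : ∑ l, (t • (Pi.single i v : ι → κ → ℝ)) l j • factorResidual m p l = 0 := by
    simpa [γ, add_smul, Finset.sum_add_distrib, h2] using h1
  rw [Finset.sum_eq_single i (fun l _ hl => by simp [hl]) (by simp)] at h3
  simpa [ht0, hj] using h3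

theorem inner_factorResidual_eq_zero_of_mem_span [DecidableEq ι] [DecidableEq κ] {m : ι → E}
    {p : (ι → κ → ℝ) × (κ → E)} (hp : IsLocalMin (factorLoss m) p) (i : ι) {x : E}
    (hx : x ∈ Submodule.span ℝ (Set.range p.2)) : ⟪factorResidual m p i, x⟫ = 0 := by
  obtain ⟨u, rfl⟩ := (Submodule.mem_span_range_iff_exists_fun ℝ).mp hx
  simp [inner_sum, inner_smul_right, inner_factorResidual_eq_zero hp]

theorem inner_eq_sum_of_mem_span [DecidableEq ι] [DecidableEq κ] {m : ι → E}
    {p : (ι → κ → ℝ) × (κ → E)} (hp : IsLocalMin (factorLoss m) p) (i : ι) {x : E}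
    (hx : x ∈ Submodule.span ℝ (Set.range p.2)) : ⟪m i, x⟫ = ∑ j, p.1 i j * ⟪p.2 j, x⟫ := by
  have h := inner_factorResidual_eq_zero_of_mem_span hp i hx
  rw [factorResidual, inner_sub_left, sum_inner] at h
  simp_rw [real_inner_smul_left] at h
  linarith

theorem inner_factorResidual_of_mem_orthogonal {ι : Type*} {m : ι → E}
    {p : (ι → κ → ℝ) × (κ → E)} (i : ι) {w : E}
    (hw : w ∈ (Submodule.span ℝ (Set.range p.2))ᗮ) : ⟪factorResidual m p i, w⟫ = -⟪m i, w⟫ := by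
  have h : ∀ j, ⟪p.2 j, w⟫ = 0 := fun j =>
    (Submodule.mem_orthogonal _ _).mp hw _ (Submodule.subset_span ⟨j, rfl⟩)
  simp [factorResidual, inner_sub_left, sum_inner, inner_smul_left, h]

theorem sum_inner_mul_inner_eq_zero [DecidableEq ι] [DecidableEq κ] {m : ι → E}
    {p : (ι → κ → ℝ) × (κ → E)} (hp : IsLocalMin (factorLoss m) p) {x w : E}
    (hx : x ∈ Submodule.span ℝ (Set.range p.2))
    (hw : w ∈ (Submodule.span ℝ (Set.range p.2))ᗮ) : ∑ i, ⟪m i, x⟫ * ⟪m i, w⟫ = 0 := by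
  have h : ∀ j, ∑ i, p.1 i j * ⟪m i, w⟫ = 0 := by
    intro j
    have hj := congrArg (fun z => ⟪z, w⟫) (sum_smul_factorResidual_eq_zero hp j)
    simpa [sum_inner, real_inner_smul_left, inner_factorResidual_of_mem_orthogonal _ hw] using hj
  simp_rw [inner_eq_sum_of_mem_span hp _ hx, Finset.sum_mul]
  rw [Finset.sum_comm]
  refine Finset.sum_eq_zero fun j _ => ?_
  calc ∑ i, p.1 i j * ⟪p.2 j, x⟫ * ⟪m i, w⟫ = ⟪p.2 j, x⟫ * ∑ i, p.1 i j * ⟪m i, w⟫ := by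
        rw [Finset.mul_sum]
        exact Finset.sum_congr rfl fun i _ => by ring
    _ = 0 := by rw [h, mul_zero]

/-- The second-order condition at a local minimum: rotating a vector `x` of the span towards
a vector `w` orthogonal to the span does not decrease the loss. -/
theorem norm_sq_mul_sum_inner_sq_le [DecidableEq ι] [DecidableEq κ] {m : ι → E}
    {p : (ι → κ → ℝ) × (κ → E)} (hp : IsLocalMin (factorLoss m) p) {x w : E}
    (hx : x ∈ Submodule.span ℝ (Set.range p.2))
    (hw : w ∈ (Submodule.span ℝ (Set.range p.2))ᗮ) :
    ‖x‖ ^ 2 * ∑ i, ⟪m i, w⟫ ^ 2 ≤ ‖w‖ ^ 2 * ∑ i, ⟪m i, x⟫ ^ 2 := by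
  obtain ⟨u, hu⟩ := (Submodule.mem_span_range_iff_exists_fun ℝ).mp hx
  have hxw : ⟪x, w⟫ = 0 := (Submodule.mem_orthogonal _ _).mp hw x hx
  have hux : ∑ j, u j * ⟪p.2 j, x⟫ = ‖x‖ ^ 2 := by
    rw [← real_inner_self_eq_norm_sq]
    nth_rewrite 2 [← hu]
    simp [sum_inner, real_inner_smul_left]
  have hcross := sum_inner_mul_inner_eq_zero hp hx hw
  have hγ := hp.eventually_le_comp
    (γ := fun t : ℝ => (p.1 + t • fun i j => ⟪m i, w⟫ * u j, p.2 + t • fun j => ⟪p.2 j, x⟫ • w))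
    (by fun_prop) (by simp)
  have hres : ∀ (t : ℝ) (i : ι), factorResidual m
      (p.1 + t • fun i j => ⟪m i, w⟫ * u j, p.2 + t • fun j => ⟪p.2 j, x⟫ • w) i =
      factorResidual m p i + (t * ⟪m i, w⟫) • x +
        (t * ⟪m i, x⟫ + t ^ 2 * ⟪m i, w⟫ * ‖x‖ ^ 2) • w := by
    intro t i
    have hsum : ∑ j, (p.1 i j + t * (⟪m i, w⟫ * u j)) • (p.2 j + t • ⟪p.2 j, x⟫ • w) =
        ∑ j, p.1 i j • p.2 j + (t * ⟪m i, w⟫) • ∑ j, u j • p.2 j +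
          (t * ∑ j, p.1 i j * ⟪p.2 j, x⟫ +
            t ^ 2 * ⟪m i, w⟫ * ∑ j, u j * ⟪p.2 j, x⟫) • w := by
      simp_rw [Finset.mul_sum, Finset.smul_sum, ← Finset.sum_add_distrib, Finset.sum_smul,
        ← Finset.sum_add_distrib]
      refine Finset.sum_congr rfl fun j _ => ?_
      module
    rw [hu, hux, ← inner_eq_sum_of_mem_span hp i hx] at hsum
    simp only [factorResidual, Pi.add_apply, Pi.smul_apply, smul_eq_mul]
    rw [hsum]
    abel
  have hnorm : ∀ (t : ℝ) (i : ι), ‖factorResidual m p i + (t * ⟪m i, w⟫) • x +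
        (t * ⟪m i, x⟫ + t ^ 2 * ⟪m i, w⟫ * ‖x‖ ^ 2) • w‖ ^ 2 =
      ‖factorResidual m p i‖ ^ 2 +
        t ^ 2 * (‖w‖ ^ 2 * ⟪m i, x⟫ ^ 2 - ‖x‖ ^ 2 * ⟪m i, w⟫ ^ 2) +
        t ^ 4 * (‖x‖ ^ 4 * ‖w‖ ^ 2 * ⟪m i, w⟫ ^ 2) +
        (2 * t ^ 3 * ‖x‖ ^ 2 * ‖w‖ ^ 2 - 2 * t) * (⟪m i, x⟫ * ⟪m i, w⟫) := by
    intro t i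
    rw [norm_add_sq_real, norm_add_sq_real, inner_add_left]
    simp only [real_inner_smul_left, real_inner_smul_right, hxw, norm_smul, mul_pow,
      Real.norm_eq_abs, sq_abs, inner_factorResidual_eq_zero_of_mem_span hp i hx,
      inner_factorResidual_of_mem_orthogonal i hw]
    ring
  refine sub_nonneg.mp (nonneg_of_eventually_nonneg
    (γ := ‖x‖ ^ 4 * ‖w‖ ^ 2 * ∑ i, ⟪m i, w⟫ ^ 2) ?_)
  filter_upwards [hγ] with t ht
  simp only [factorLoss, hres, hnorm, Finset.sum_add_distrib, Finset.sum_sub_distrib,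
    ← Finset.mul_sum, hcross] at ht
  linarith

variable [FiniteDimensional ℝ E]

theorem sum_norm_sq_sub_starProjection_le_factorLoss (m : ι → E) (q : (ι → κ → ℝ) × (κ → E)) :
    ∑ i, (‖m i‖ ^ 2 - ‖(Submodule.span ℝ (Set.range q.2)).starProjection (m i)‖ ^ 2) ≤
      factorLoss m q := by
  set V := Submodule.span ℝ (Set.range q.2)
  refine Finset.sum_le_sum fun i _ => ?_
  have hmem : ∑ j, q.1 i j • q.2 j ∈ V :=
    (Submodule.mem_span_range_iff_exists_fun ℝ).mpr ⟨_, rfl⟩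
  have h1 := V.norm_sq_eq_add_norm_sq_starProjection (m i)
  have h2 := V.norm_sq_eq_add_norm_sq_starProjection (factorResidual m q i)
  have h3 : Vᗮ.starProjection (factorResidual m q i) = -Vᗮ.starProjection (m i) := by
    have h0 : Vᗮ.starProjection (∑ j, q.1 i j • q.2 j) = 0 := by
      rw [Submodule.starProjection_orthogonal_val, V.starProjection_eq_self_iff.mpr hmem, sub_self]
    rw [factorResidual, map_sub, h0, zero_sub]
  rw [h3, norm_neg] at h2
  nlinarith [sq_nonneg ‖V.starProjection (factorResidual m q i)‖]

theorem factorLoss_eq_of_isLocalMin [DecidableEq ι] [DecidableEq κ] {m : ι → E}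
    {p : (ι → κ → ℝ) × (κ → E)} (hp : IsLocalMin (factorLoss m) p) :
    factorLoss m p =
      ∑ i, (‖m i‖ ^ 2 - ‖(Submodule.span ℝ (Set.range p.2)).starProjection (m i)‖ ^ 2) := by
  set U := Submodule.span ℝ (Set.range p.2)
  refine Finset.sum_congr rfl fun i _ => ?_
  have hmem : ∑ j, p.1 i j • p.2 j ∈ U :=
    (Submodule.mem_span_range_iff_exists_fun ℝ).mpr ⟨_, rfl⟩
  have hproj : U.starProjection (m i) = ∑ j, p.1 i j • p.2 j := by
    refine Submodule.eq_starProjection_of_mem_of_inner_eq_zero hmem fun x hx => ?_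
    have h := inner_factorResidual_eq_zero_of_mem_span hp i hx
    rw [← neg_sub, inner_neg_left, ← factorResidual, h, neg_zero]
  have h1 := U.norm_sq_eq_add_norm_sq_starProjection (m i)
  rw [Submodule.starProjection_orthogonal_val, norm_sub_rev, hproj, ← factorResidual] at h1
  rw [hproj]
  linarith

/-- The low-rank factorization loss has no spurious local minima. -/
theorem factorLoss_le_of_isLocalMin {m : ι → E} {p : (ι → κ → ℝ) × (κ → E)}
    (hp : IsLocalMin (factorLoss m) p) (q : (ι → κ → ℝ) × (κ → E)) :
    factorLoss m p ≤ factorLoss m q := by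
  classical
  by_cases hb : LinearIndependent ℝ p.2
  · rw [factorLoss_eq_of_isLocalMin hp]
    refine le_trans ?_ (sum_norm_sq_sub_starProjection_le_factorLoss m q)
    simp_rw [Finset.sum_sub_distrib]
    refine sub_le_sub_left (sum_norm_sq_starProjection_le m _ _ ?_
      (fun x hx w hw => sum_inner_mul_inner_eq_zero hp hx hw)
      (fun x hx w hw => norm_sq_mul_sum_inner_sq_le hp hx hw)) _
    rw [finrank_span_eq_card hb]
    exact finrank_range_le_card q.2
  · have h0 : factorLoss m p = 0 := by
      simp [factorLoss, factorResidual_eq_zero_of_not_linearIndependent hp hb]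
    rw [h0]
    exact Finset.sum_nonneg fun i _ => sq_nonneg _

end Factorization

section Reduction

theorem vnorm_sq_eq_dotProduct {n : ℕ} (v : Fin n → ℝ) : vnorm v ^ 2 = v ⬝ᵥ v := by
  rw [vnorm, Real.sq_sqrt (Finset.sum_nonneg fun i _ => sq_nonneg _)]
  simp [dotProduct, sq]

theorem norm_toLp_sq_eq_dotProduct {n : ℕ} (v : Fin n → ℝ) : ‖WithLp.toLp 2 v‖ ^ 2 = v ⬝ᵥ v := by
  rw [EuclideanSpace.real_norm_sq_eq]
  simp [dotProduct, sq]

/-- Completing the square for a least squares problem with orthonormal design matrix. -/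
theorem vnorm_sq_mulVec_sub_of_transpose_mul_self {n d : ℕ} {Q : Matrix (Fin n) (Fin d) ℝ}
    (hQ : Qᵀ * Q = 1) (v : Fin d → ℝ) (y : Fin n → ℝ) :
    vnorm (Q *ᵥ v - y) ^ 2 =
      ‖WithLp.toLp 2 v - WithLp.toLp 2 (Qᵀ *ᵥ y)‖ ^ 2 + (y ⬝ᵥ y - (Qᵀ *ᵥ y) ⬝ᵥ (Qᵀ *ᵥ y)) := by
  have h1 : (Q *ᵥ v) ⬝ᵥ (Q *ᵥ v) = v ⬝ᵥ v := by
    rw [dotProduct_mulVec, vecMul_mulVec, ← dotProduct_mulVec, hQ, one_mulVec]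
  have h2 : (Q *ᵥ v) ⬝ᵥ y = v ⬝ᵥ (Qᵀ *ᵥ y) := by
    rw [dotProduct_comm, dotProduct_mulVec, ← mulVec_transpose, dotProduct_comm]
  rw [vnorm_sq_eq_dotProduct, ← WithLp.toLp_sub, norm_toLp_sq_eq_dotProduct]
  simp only [sub_dotProduct, dotProduct_sub, h1, h2, dotProduct_comm y, dotProduct_comm (Qᵀ *ᵥ y) v]
  ring

open scoped MatrixOrder Matrix.Norms.L2Operator in
theorem Matrix.PosDef.exists_eq_transpose_mul_self {n : ℕ} {S : Matrix (Fin n) (Fin n) ℝ}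
    (hS : S.PosDef) : ∃ C : Matrix (Fin n) (Fin n) ℝ, IsUnit C.det ∧ S = Cᵀ * C := by
  obtain ⟨C, hC, hSC⟩ :=
    CStarAlgebra.isStrictlyPositive_iff_eq_star_mul_self.mp hS.isStrictlyPositive
  exact ⟨C, (isUnit_iff_isUnit_det C).mp hC, by simpa [star_eq_conjTranspose] using hSC⟩

theorem transpose_mul_self_whitened {n d : ℕ} {X : Matrix (Fin n) (Fin d) ℝ}
    {C : Matrix (Fin d) (Fin d) ℝ} {a : ℝ} (ha : 0 < a) (hC : IsUnit C.det)
    (hX : Xᵀ * X = a • (Cᵀ * C)) :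
    ((Real.sqrt a)⁻¹ • (X * C⁻¹))ᵀ * ((Real.sqrt a)⁻¹ • (X * C⁻¹)) = 1 := by
  have hs : (Real.sqrt a)⁻¹ * (Real.sqrt a)⁻¹ * a = 1 := by
    rw [← mul_inv, Real.mul_self_sqrt ha.le, inv_mul_cancel₀ ha.ne']
  have hCt : (C⁻¹)ᵀ * Cᵀ = 1 := by rw [← transpose_mul, mul_nonsing_inv C hC, transpose_one]
  calc ((Real.sqrt a)⁻¹ • (X * C⁻¹))ᵀ * ((Real.sqrt a)⁻¹ • (X * C⁻¹))
      = ((Real.sqrt a)⁻¹ * (Real.sqrt a)⁻¹) • ((C⁻¹)ᵀ * (Xᵀ * X) * C⁻¹) := by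
        simp only [transpose_smul, transpose_mul, Matrix.smul_mul, Matrix.mul_smul, smul_smul,
          Matrix.mul_assoc]
    _ = ((Real.sqrt a)⁻¹ * (Real.sqrt a)⁻¹ * a) • (((C⁻¹)ᵀ * Cᵀ) * (C * C⁻¹)) := by
        simp only [hX, Matrix.smul_mul, Matrix.mul_smul, smul_smul, Matrix.mul_assoc]
    _ = 1 := by rw [hs, hCt, mul_nonsing_inv C hC, one_smul, Matrix.one_mul]

end Reduction

/-- Lemma: no spurious local minima: if `XᵢᵀXᵢ = αᵢ Σ` with `αᵢ > 0`
and `Σ` positive definite, then every local minimum of the linear MTL objective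
`f(A₁,…,A_k; B) = Σᵢ ‖Xᵢ B Aᵢ − yᵢ‖²` is a global minimum. -/
theorem mtl_local_min_is_global
    (k d r : ℕ) (hk : 1 ≤ k) (hr : 1 ≤ r)
    (m : Fin k → ℕ)
    (X : ∀ i : Fin k, Matrix (Fin (m i)) (Fin d) ℝ)
    (S : Matrix (Fin d) (Fin d) ℝ) (hSpd : S.PosDef)
    (α : Fin k → ℝ) (hα : ∀ i, 0 < α i)
    (hXS : ∀ i, (X i)ᵀ * X i = α i • S)
    (y : ∀ i : Fin k, Fin (m i) → ℝ)
    (f : (Fin k → Fin r → ℝ) × Matrix (Fin d) (Fin r) ℝ → ℝ)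
    (hf : f = fun p => ∑ i, vnorm (fun j => (X i).mulVec (p.2.mulVec (p.1 i)) j - y i j) ^ 2)
    (p : (Fin k → Fin r → ℝ) × Matrix (Fin d) (Fin r) ℝ)
    (hp : IsLocalMin f p) :
    ∀ q, f p ≤ f q := by
  obtain ⟨C, hC, rfl⟩ := hSpd.exists_eq_transpose_mul_self
  let Q : ∀ i, Matrix (Fin (m i)) (Fin d) ℝ := fun i => (Real.sqrt (α i))⁻¹ • (X i * C⁻¹)
  have hQ : ∀ i, (Q i)ᵀ * Q i = 1 := fun i => transpose_mul_self_whitened (hα i) hC (hXS i)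
  let z : Fin k → EuclideanSpace ℝ (Fin d) := fun i => WithLp.toLp 2 ((Q i)ᵀ *ᵥ y i)
  let ψ : (Fin k → Fin r → ℝ) × (Fin r → EuclideanSpace ℝ (Fin d)) →
      (Fin k → Fin r → ℝ) × Matrix (Fin d) (Fin r) ℝ := fun q =>
    (fun i => (Real.sqrt (α i))⁻¹ • q.1 i, C⁻¹ * Matrix.of fun s j => q.2 j s)
  have hψ : Continuous ψ := by
    refine Continuous.prodMk (by fun_prop) (continuous_const.matrix_mul ?_)
    exact continuous_matrix fun s j => by simp only [of_apply]; fun_prop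
  have hψ_surj : Function.Surjective ψ := by
    rintro ⟨a, B⟩
    refine ⟨(fun i => Real.sqrt (α i) • a i, fun j => WithLp.toLp 2 fun s => (C * B) s j), ?_⟩
    refine Prod.ext (funext fun i => ?_) ?_
    · simp only [ψ, smul_smul, inv_mul_cancel₀ (Real.sqrt_pos.mpr (hα i)).ne', one_smul]
    · change C⁻¹ * (C * B) = B
      rw [← Matrix.mul_assoc, nonsing_inv_mul C hC, Matrix.one_mul]
  have hfψ : ∀ q, f (ψ q) = factorLoss z q +
      ∑ i, (y i ⬝ᵥ y i - ((Q i)ᵀ *ᵥ y i) ⬝ᵥ ((Q i)ᵀ *ᵥ y i)) := by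
    intro q
    rw [hf, factorLoss, ← Finset.sum_add_distrib]
    refine Finset.sum_congr rfl fun i _ => ?_
    have hcomb : ∑ j, q.1 i j • q.2 j =
        WithLp.toLp 2 ((Matrix.of fun s j => q.2 j s) *ᵥ q.1 i) := by
      ext s
      simp [mulVec, dotProduct, mul_comm]
    rw [factorResidual, hcomb, ← vnorm_sq_mulVec_sub_of_transpose_mul_self (hQ i)]
    congr 2
    funext j
    simp only [ψ, Q, Pi.sub_apply, mulVec_smul, smul_mulVec, mulVec_mulVec, Matrix.smul_mul,
      Matrix.mul_assoc]
  obtain ⟨p', rfl⟩ := hψ_surj p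
  have hp' : IsLocalMin (factorLoss z) p' := by
    filter_upwards [hψ.continuousAt.eventually hp] with q hq
    simpa only [hfψ, add_le_add_iff_right] using hq
  intro q
  obtain ⟨q', rfl⟩ := hψ_surj q
  simpa only [hfψ, add_le_add_iff_right] using factorLoss_le_of_isLocalMin hp' q'
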